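/- Metric uncertainty relations compose under tensor products with additive error: if {U^{(1)}_{k₁}}_{k₁∈[t₁]} satisfies an ε-metric uncertainty relation on A₁ (acting on A₁⊗B₁) and {U^{(2)}_{k₂}}_{k₂∈[t₂]} satisfies an ε-metric uncertainty relation on A₂ (acting on A₂⊗B₂), then the family {U^{(1)}_{k₁} ⊗ U^{(2)}_{k₂}} satisfies a 2ε-metric uncertainty relation on A₁ ⊗ A₂. -/

import Mathlib

open scoped BigOperators Kronecker

/-!
Apply `U₁` to the first system and measure it before turning to the second. An outcome `(a₁, b₁)`
leaves the second system in the unnormalised vector `φ (a₁, b₁)`, so given `a₁` it is in a mixture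
over `b₁`. By the triangle inequality the joint outcome `(a₁, a₂)` deviates from uniform by at most
the deviation of `a₁` plus the sum over `a₁` of the conditional deviations of `a₂`.

An uncertainty relation for unit vectors extends, by homogeneity and the triangle inequality, to
mixtures of unnormalised vectors. Applied to the `φ (a₁, b₁)`, of total mass `1` because `U₁`
preserves norms, it bounds the conditional deviations by `ε₂`. Applied to the columns of `ψ`, seen
as a matrix with one index for each system, it bounds the deviation of `a₁` by `ε₁`.
-/

open scoped Matrix

section UniformDeviation

variable {α α₁ α₂ ι : Type*} [Fintype α] [Fintype α₁] [Fintype α₂] [Fintype ι]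

/-- The total variation distance between the weights `p` and the uniform weights of total mass `s`.
The mass is a separate argument, not `∑ a, p a`, which makes the distance jointly sublinear in
`(s, p)` even when the masses disagree. -/
noncomputable def uniformDeviation (s : ℝ) (p : α → ℝ) : ℝ :=
  (1 / 2) * ∑ a, |p a - s / Fintype.card α|

theorem uniformDeviation_sum_le (s : ι → ℝ) (p : ι → α → ℝ) :
    uniformDeviation (∑ i, s i) (fun a => ∑ i, p i a) ≤ ∑ i, uniformDeviation (s i) (p i) := by
  simp only [uniformDeviation, ← Finset.mul_sum]
  rw [Finset.sum_comm]
  gcongr with a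
  rw [Finset.sum_div, ← Finset.sum_sub_distrib]
  exact Finset.abs_sum_le_sum_abs _ _

theorem uniformDeviation_mul {c : ℝ} (hc : 0 ≤ c) (s : ℝ) (p : α → ℝ) :
    uniformDeviation (c * s) (fun a => c * p a) = c * uniformDeviation s p := by
  simp only [uniformDeviation, mul_div_assoc, ← mul_sub, abs_mul, abs_of_nonneg hc,
    ← Finset.mul_sum]
  ring

theorem uniformDeviation_prod_le [Nonempty α₂] (s : ℝ) (r : α₁ → ℝ) (p : α₁ × α₂ → ℝ) :
    uniformDeviation s p ≤
      ∑ a₁, uniformDeviation (r a₁) (fun a₂ => p (a₁, a₂)) + uniformDeviation s r := by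
  have hcard : (Fintype.card α₂ : ℝ) ≠ 0 := by simp
  have triangle (a₁ : α₁) (a₂ : α₂) : |p (a₁, a₂) - s / Fintype.card (α₁ × α₂)| ≤
      |p (a₁, a₂) - r a₁ / Fintype.card α₂| +
        |r a₁ - s / Fintype.card α₁| / Fintype.card α₂ := by
    calc |p (a₁, a₂) - s / Fintype.card (α₁ × α₂)|
        = |(p (a₁, a₂) - r a₁ / Fintype.card α₂) +
            (r a₁ - s / Fintype.card α₁) / Fintype.card α₂| := by
          rw [Fintype.card_prod, Nat.cast_mul, ← div_div]
          ring_nf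
      _ ≤ _ := (abs_add_le _ _).trans_eq (by rw [abs_div, Nat.abs_cast])
  calc uniformDeviation s p
      ≤ (1 / 2) * ∑ a₁, ∑ a₂, (|p (a₁, a₂) - r a₁ / Fintype.card α₂| +
          |r a₁ - s / Fintype.card α₁| / Fintype.card α₂) := by
        rw [uniformDeviation, Fintype.sum_prod_type]
        gcongr with a₁ _ a₂
        exact triangle a₁ a₂
    _ = _ := by
        simp only [uniformDeviation, Finset.sum_add_distrib, Finset.sum_const, Finset.card_univ,
          nsmul_eq_mul, mul_div_cancel₀ _ hcard, mul_add, Finset.mul_sum]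

end UniformDeviation

section OutcomeWeight

variable {α β 𝕜 : Type*} [Fintype β] [RCLike 𝕜]

/-- The weights `p^A_v` of the outcomes when the first factor of the (not necessarily normalised)
vector `v` on `A ⊗ B` is measured in the computational basis. -/
def outcomeWeight (v : α × β → 𝕜) (a : α) : ℝ :=
  ∑ b, ‖v (a, b)‖ ^ 2

theorem outcomeWeight_smul (c : 𝕜) (v : α × β → 𝕜) (a : α) :
    outcomeWeight (c • v) a = ‖c‖ ^ 2 * outcomeWeight v a := by
  simp only [outcomeWeight, Pi.smul_apply, smul_eq_mul, norm_mul, mul_pow, Finset.mul_sum]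

end OutcomeWeight

section MetricUncertaintyRelation

variable {α β m κ ι 𝕜 : Type*} [Fintype α] [Fintype β] [Fintype m] [Fintype κ] [Fintype ι]
  [RCLike 𝕜]

/-- The `ε`-metric uncertainty relation on the system `A` with basis `α`, for the family `U` of
linear maps into `A ⊗ B`. The maps may start from another space, with basis `m`, and unitarity is
not part of the notion. -/
def IsMetricUncertaintyRelation (U : κ → Matrix (α × β) m 𝕜) (ε : ℝ) : Prop :=
  ∀ ψ : EuclideanSpace 𝕜 m, ‖ψ‖ = 1 → 𝔼 k, uniformDeviation 1 (outcomeWeight (U k *ᵥ ψ)) ≤ ε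

theorem isMetricUncertaintyRelation_iff {U : κ → Matrix (α × β) m 𝕜} {ε : ℝ} :
    IsMetricUncertaintyRelation U ε ↔ ∀ ψ : EuclideanSpace 𝕜 m, ‖ψ‖ = 1 →
      (1 / (Fintype.card κ : ℝ)) * ∑ k, (1 / 2) * ∑ a,
        |(∑ b, ‖(U k *ᵥ ψ) (a, b)‖ ^ 2) - 1 / (Fintype.card α : ℝ)| ≤ ε := by
  simp only [IsMetricUncertaintyRelation, uniformDeviation, outcomeWeight,
    Fintype.expect_eq_sum_div_card, one_div_mul_eq_div]

namespace IsMetricUncertaintyRelation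

variable {U : κ → Matrix (α × β) m 𝕜} {ε : ℝ}

theorem expect_uniformDeviation_le (hU : IsMetricUncertaintyRelation U ε) (v : m → 𝕜) :
    𝔼 k, uniformDeviation (∑ x, ‖v x‖ ^ 2) (outcomeWeight (U k *ᵥ v)) ≤ ε * ∑ x, ‖v x‖ ^ 2 := by
  obtain ⟨w, rfl⟩ : ∃ w : EuclideanSpace 𝕜 m, w.ofLp = v := ⟨WithLp.toLp 2 v, rfl⟩
  rw [← EuclideanSpace.norm_sq_eq w]
  rcases eq_or_ne w 0 with rfl | hw
  · simp [uniformDeviation, outcomeWeight]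
  obtain ⟨u, hu, hwu⟩ : ∃ u : EuclideanSpace 𝕜 m, ‖u‖ = 1 ∧ w = (‖w‖ : 𝕜) • u :=
    ⟨(‖w‖ : 𝕜)⁻¹ • w, norm_smul_inv_norm hw, (smul_inv_smul₀ (by simpa using hw) w).symm⟩
  have hdev (k : κ) : uniformDeviation (‖w‖ ^ 2) (outcomeWeight (U k *ᵥ w)) =
      ‖w‖ ^ 2 * uniformDeviation 1 (outcomeWeight (U k *ᵥ u)) := by
    rw [← uniformDeviation_mul (sq_nonneg _), mul_one]
    congr 1
    ext a
    conv_lhs => rw [hwu]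
    rw [WithLp.ofLp_smul, Matrix.mulVec_smul, outcomeWeight_smul, RCLike.norm_ofReal, abs_norm]
  simp only [hdev, ← Finset.mul_expect]
  rw [mul_comm]
  gcongr
  exact hU u hu

theorem expect_uniformDeviation_sum_le (hU : IsMetricUncertaintyRelation U ε) (v : ι → m → 𝕜) :
    𝔼 k, uniformDeviation (∑ i, ∑ x, ‖v i x‖ ^ 2) (fun a => ∑ i, outcomeWeight (U k *ᵥ v i) a) ≤
      ε * ∑ i, ∑ x, ‖v i x‖ ^ 2 :=
  calc
    _ ≤ 𝔼 k, ∑ i, uniformDeviation (∑ x, ‖v i x‖ ^ 2) (outcomeWeight (U k *ᵥ v i)) :=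
      Finset.expect_le_expect fun _ _ => uniformDeviation_sum_le _ _
    _ = ∑ i, 𝔼 k, uniformDeviation (∑ x, ‖v i x‖ ^ 2) (outcomeWeight (U k *ᵥ v i)) :=
      Finset.expect_sum_comm _ _ _
    _ ≤ ∑ i, ε * ∑ x, ‖v i x‖ ^ 2 :=
      Finset.sum_le_sum fun i _ => hU.expect_uniformDeviation_le (v i)
    _ = ε * ∑ i, ∑ x, ‖v i x‖ ^ 2 := (Finset.mul_sum _ _ _).symm

end IsMetricUncertaintyRelation

end MetricUncertaintyRelation

section TensorProduct

variable {α₁ β₁ α₂ β₂ l m n m₁ m₂ κ₁ κ₂ R 𝕜 : Type*} [RCLike 𝕜]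

theorem trace_conjTranspose_mul_self_eq_sum [Fintype m] [Fintype n] (M : Matrix m n 𝕜) :
    (Mᴴ * M).trace = ((∑ i, ∑ j, ‖M i j‖ ^ 2 : ℝ) : 𝕜) := by
  rw [Finset.sum_comm]
  simp [Matrix.trace, Matrix.mul_apply, RCLike.conj_mul]

theorem sum_norm_sq_mul_of_conjTranspose_mul_self [Fintype l] [Fintype m] [Fintype n]
    [DecidableEq m] {A : Matrix l m 𝕜} (hA : Aᴴ * A = 1) (M : Matrix m n 𝕜) :
    ∑ x, ∑ j, ‖(A * M) x j‖ ^ 2 = ∑ i, ∑ j, ‖M i j‖ ^ 2 := by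
  have hgram : (A * M)ᴴ * (A * M) = Mᴴ * M := by
    rw [Matrix.conjTranspose_mul, Matrix.mul_assoc, ← Matrix.mul_assoc Aᴴ, hA, Matrix.one_mul]
  apply RCLike.ofReal_injective (K := 𝕜)
  rw [← trace_conjTranspose_mul_self_eq_sum, ← trace_conjTranspose_mul_self_eq_sum, hgram]

theorem kronecker_mulVec_apply [CommSemiring R] [Fintype m₁] [Fintype m₂] (A : Matrix l m₁ R)
    (B : Matrix n m₂ R) (v : m₁ × m₂ → R) (x : l) (y : n) :
    ((A ⊗ₖ B) *ᵥ v) (x, y) = (B *ᵥ (A * Matrix.of (Function.curry v)).row x) y := by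
  have hvec : v = Matrix.vec (Matrix.of (Function.curry v))ᵀ := rfl
  conv_lhs => rw [hvec]
  rw [Matrix.kronecker_mulVec_vec, Matrix.mul_assoc, ← Matrix.transpose_mul]
  rfl

/-- The family `{U₁ k₁ ⊗ U₂ k₂}`, with the rows regrouped from `A₁B₁A₂B₂` to `A₁A₂B₁B₂` so that
`A₁ ⊗ A₂` is the measured system. -/
def tensorFamily [Mul R] (U₁ : κ₁ → Matrix (α₁ × β₁) m₁ R)
    (U₂ : κ₂ → Matrix (α₂ × β₂) m₂ R) (k : κ₁ × κ₂) :
    Matrix ((α₁ × α₂) × (β₁ × β₂)) (m₁ × m₂) R :=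
  (U₁ k.1 ⊗ₖ U₂ k.2).submatrix (Equiv.prodProdProdComm α₁ α₂ β₁ β₂) id

variable [Fintype m₁] [Fintype m₂]

theorem tensorFamily_mulVec_apply [NonUnitalNonAssocSemiring R]
    (U₁ : κ₁ → Matrix (α₁ × β₁) m₁ R) (U₂ : κ₂ → Matrix (α₂ × β₂) m₂ R) (k : κ₁ × κ₂)
    (v : m₁ × m₂ → R) (a : α₁ × α₂) (b : β₁ × β₂) :
    (tensorFamily U₁ U₂ k *ᵥ v) (a, b) =
      ((U₁ k.1 ⊗ₖ U₂ k.2) *ᵥ v) ((a.1, b.1), (a.2, b.2)) :=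
  rfl

variable [Fintype β₁] [Fintype β₂]

theorem outcomeWeight_tensorFamily_mulVec (U₁ : κ₁ → Matrix (α₁ × β₁) m₁ 𝕜)
    (U₂ : κ₂ → Matrix (α₂ × β₂) m₂ 𝕜) (k : κ₁ × κ₂) (v : m₁ × m₂ → 𝕜) (a : α₁ × α₂) :
    outcomeWeight (tensorFamily U₁ U₂ k *ᵥ v) a =
      ∑ b₁, outcomeWeight
        (U₂ k.2 *ᵥ (U₁ k.1 * Matrix.of (Function.curry v)).row (a.1, b₁)) a.2 := by
  simp only [outcomeWeight, Fintype.sum_prod_type, tensorFamily_mulVec_apply,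
    kronecker_mulVec_apply]

theorem sum_outcomeWeight_mulVec_col (A : Matrix (α₁ × β₁) m₁ 𝕜) (M : Matrix m₁ m₂ 𝕜)
    (a : α₁) :
    ∑ j, outcomeWeight (A *ᵥ M.col j) a = ∑ b, ∑ j, ‖(A * M) (a, b) j‖ ^ 2 :=
  Finset.sum_comm

variable [Fintype α₁] [Fintype α₂] [Fintype κ₁] [Fintype κ₂]

theorem isMetricUncertaintyRelation_tensorFamily_iff {U₁ : κ₁ → Matrix (α₁ × β₁) m₁ 𝕜}
    {U₂ : κ₂ → Matrix (α₂ × β₂) m₂ 𝕜} {ε : ℝ} :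
    IsMetricUncertaintyRelation (tensorFamily U₁ U₂) ε ↔
      ∀ ψ : EuclideanSpace 𝕜 (m₁ × m₂), ‖ψ‖ = 1 →
        (1 / ((Fintype.card κ₁ : ℝ) * Fintype.card κ₂)) * ∑ k₁, ∑ k₂, (1 / 2) * ∑ a₁, ∑ a₂,
          |(∑ b₁, ∑ b₂, ‖((U₁ k₁ ⊗ₖ U₂ k₂) *ᵥ ψ) ((a₁, b₁), (a₂, b₂))‖ ^ 2)
            - 1 / ((Fintype.card α₁ : ℝ) * Fintype.card α₂)| ≤ ε := by
  simp only [isMetricUncertaintyRelation_iff, tensorFamily_mulVec_apply, Fintype.sum_prod_type,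
    Fintype.card_prod, Nat.cast_mul]

theorem stmt9_general [DecidableEq m₁] [Nonempty α₂] [Nonempty κ₁] [Nonempty κ₂]
    {U₁ : κ₁ → Matrix (α₁ × β₁) m₁ 𝕜} {U₂ : κ₂ → Matrix (α₂ × β₂) m₂ 𝕜} {ε₁ ε₂ : ℝ}
    (h₁ : IsMetricUncertaintyRelation U₁ ε₁) (h₂ : IsMetricUncertaintyRelation U₂ ε₂)
    (hU₁ : ∀ k, (U₁ k)ᴴ * U₁ k = 1) :
    IsMetricUncertaintyRelation (tensorFamily U₁ U₂) (ε₁ + ε₂) := by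
  intro ψ hψ
  let M : Matrix m₁ m₂ 𝕜 := Matrix.of (Function.curry ψ)
  have hM : ∑ i, ∑ j, ‖M i j‖ ^ 2 = 1 := by
    rw [← Fintype.sum_prod_type', ← one_pow 2, ← hψ, EuclideanSpace.norm_sq_eq]
    rfl
  let φ (k₁ : κ₁) : Matrix (α₁ × β₁) m₂ 𝕜 := U₁ k₁ * M
  let r (k₁ : κ₁) (a₁ : α₁) : ℝ := ∑ b₁, ∑ j, ‖φ k₁ (a₁, b₁) j‖ ^ 2
  let dev₂ (k₁ : κ₁) (k₂ : κ₂) (a₁ : α₁) : ℝ :=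
    uniformDeviation (r k₁ a₁) fun a₂ => ∑ b₁, outcomeWeight (U₂ k₂ *ᵥ (φ k₁).row (a₁, b₁)) a₂
  have hr (k₁ : κ₁) : ∑ a₁, r k₁ a₁ = 1 := by
    rw [← hM, ← sum_norm_sq_mul_of_conjTranspose_mul_self (hU₁ k₁), Fintype.sum_prod_type]
  have first_le : 𝔼 k₁, uniformDeviation 1 (r k₁) ≤ ε₁ := by
    have h := h₁.expect_uniformDeviation_sum_le M.col
    have hcol : ∑ j, ∑ i, ‖M.col j i‖ ^ 2 = 1 := Finset.sum_comm.trans hM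
    simpa only [sum_outcomeWeight_mulVec_col, hcol, mul_one] using h
  have second_le (k₁ : κ₁) : 𝔼 k₂, ∑ a₁, dev₂ k₁ k₂ a₁ ≤ ε₂ := by
    rw [Finset.expect_sum_comm, ← mul_one ε₂, ← hr k₁, Finset.mul_sum]
    exact Finset.sum_le_sum fun a₁ _ =>
      h₂.expect_uniformDeviation_sum_le fun b₁ => (φ k₁).row (a₁, b₁)
  calc 𝔼 k, uniformDeviation 1 (outcomeWeight (tensorFamily U₁ U₂ k *ᵥ ψ))
      ≤ 𝔼 k : κ₁ × κ₂, (∑ a₁, dev₂ k.1 k.2 a₁ + uniformDeviation 1 (r k.1)) := by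
        refine Finset.expect_le_expect fun k _ => ?_
        rw [funext (outcomeWeight_tensorFamily_mulVec U₁ U₂ k ψ)]
        exact uniformDeviation_prod_le _ _ _
    _ = 𝔼 k₁, (𝔼 k₂, ∑ a₁, dev₂ k₁ k₂ a₁) + 𝔼 k₁, uniformDeviation 1 (r k₁) := by
        rw [← Finset.univ_product_univ, Finset.expect_product]
        simp only [Finset.expect_add_distrib, Fintype.expect_const]
    _ ≤ ε₂ + ε₁ :=
        add_le_add (Finset.expect_le Finset.univ_nonempty fun k₁ _ => second_le k₁) first_le
    _ = ε₁ + ε₂ := add_comm _ _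

end TensorProduct

/-- (Parallel composition) If `{U¹_{k₁}}` on `A₁⊗B₁` satisfies an
`ε`-metric uncertainty relation on `A₁` and `{U²_{k₂}}` on `A₂⊗B₂` satisfies an
`ε`-metric uncertainty relation on `A₂`, then the family of tensor products
`{U¹_{k₁} ⊗ U²_{k₂}}` satisfies a `2ε`-metric uncertainty relation on `A₁ ⊗ A₂`. -/
theorem stmt9 (dA1 dB1 dA2 dB2 t1 t2 : ℕ)
    (hA1 : 0 < dA1) (hB1 : 0 < dB1) (hA2 : 0 < dA2) (hB2 : 0 < dB2)
    (ht1 : 0 < t1) (ht2 : 0 < t2) (ε : ℝ) (hε : 0 ≤ ε)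
    (U1 : Fin t1 → Matrix (Fin dA1 × Fin dB1) (Fin dA1 × Fin dB1) ℂ)
    (U2 : Fin t2 → Matrix (Fin dA2 × Fin dB2) (Fin dA2 × Fin dB2) ℂ)
    (hU1 : ∀ k, U1 k ∈ Matrix.unitaryGroup (Fin dA1 × Fin dB1) ℂ)
    (hU2 : ∀ k, U2 k ∈ Matrix.unitaryGroup (Fin dA2 × Fin dB2) ℂ)
    (hMUR1 : ∀ ψ : EuclideanSpace ℂ (Fin dA1 × Fin dB1), ‖ψ‖ = 1 →
      (1 / (t1 : ℝ)) * ∑ k1, (1 / 2) * ∑ a1 : Fin dA1,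
          |(∑ b1 : Fin dB1, ‖(U1 k1).mulVec ψ (a1, b1)‖ ^ 2) - 1 / (dA1 : ℝ)| ≤ ε)
    (hMUR2 : ∀ ψ : EuclideanSpace ℂ (Fin dA2 × Fin dB2), ‖ψ‖ = 1 →
      (1 / (t2 : ℝ)) * ∑ k2, (1 / 2) * ∑ a2 : Fin dA2,
          |(∑ b2 : Fin dB2, ‖(U2 k2).mulVec ψ (a2, b2)‖ ^ 2) - 1 / (dA2 : ℝ)| ≤ ε) :
    ∀ ψ : EuclideanSpace ℂ ((Fin dA1 × Fin dB1) × (Fin dA2 × Fin dB2)), ‖ψ‖ = 1 →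
      (1 / ((t1 : ℝ) * t2)) * ∑ k1, ∑ k2, (1 / 2) *
          ∑ a1 : Fin dA1, ∑ a2 : Fin dA2,
            |(∑ b1 : Fin dB1, ∑ b2 : Fin dB2,
                ‖(U1 k1 ⊗ₖ U2 k2).mulVec ψ ((a1, b1), (a2, b2))‖ ^ 2)
              - 1 / ((dA1 : ℝ) * dA2)| ≤ 2 * ε := by
  have := Fin.pos_iff_nonempty.1 hA2
  have := Fin.pos_iff_nonempty.1 ht1
  have := Fin.pos_iff_nonempty.1 ht2
  have h₁ : IsMetricUncertaintyRelation U1 ε := by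
    simpa only [isMetricUncertaintyRelation_iff, Fintype.card_fin] using hMUR1
  have h₂ : IsMetricUncertaintyRelation U2 ε := by
    simpa only [isMetricUncertaintyRelation_iff, Fintype.card_fin] using hMUR2
  simpa only [isMetricUncertaintyRelation_tensorFamily_iff, Fintype.card_fin, two_mul] using
    stmt9_general h₁ h₂ fun k => Matrix.mem_unitaryGroup_iff'.1 (hU1 k)
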